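/- arXiv:2002.04870 — 2 statements merged into one kernel-verified Lean document; each statement's English description precedes it below -/
import Mathlib

section
/- For every real number ε with 0 < ε < 1 and every integer k ≥ 2, there exist a finite set P ⊂ ℝ of k+1 points and a point q ∈ ℝ (with the usual metric on ℝ) such that: there is p* ∈ P with |q − p*| < |q − y| for all y ∈ P∖{p*} (p* is the unique nearest neighbor of q in P), and every set S ⊆ P with |S| = k satisfying |p* − x| ≤ |p* − y| for all x ∈ S and y ∈ P∖S contains a point x₀ with |q − x₀| > 3·(1−ε)·r, where r is the k-nearest-neighbor radius of q in P. -/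
/-- `r` is the `k`-nearest-neighbor radius of `q` in the finite point set `P`. -/
def IsKNNRadius {M : Type*} [MetricSpace M] (P : Finset M) (k : ℕ) (q : M)
    (r : ℝ) : Prop :=
  ∃ T ⊆ P, T.card = k ∧
    (∀ x ∈ T, ∀ y ∈ P, y ∉ T → dist q x ≤ dist q y) ∧
    (∀ x ∈ T, dist q x ≤ r) ∧ (∃ x ∈ T, dist q x = r)

/-!
Put the query at `0`, its nearest neighbor at `1 - ε / 2`, one point at `-1`, one at `3 - 2 * ε`,
and all others strictly between `1 - ε / 2` and `1`. All points but `3 - 2 * ε` are within distance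
`1` of the query, so the radius is at most `1`. Seen from the nearest neighbor, however, `-1` is the
unique farthest point, so its `k` nearest neighbors include `3 - 2 * ε > 3 * (1 - ε)`.
-/

open Set

/-- `S` is a set of nearest neighbors of `q` in `P`, of unspecified size; ties at the largest
distance may be broken arbitrarily. -/
def IsNearestSubset {M : Type*} [Dist M] (S P : Finset M) (q : M) : Prop :=
  S ⊆ P ∧ ∀ x ∈ S, ∀ y ∈ P, y ∉ S → dist q x ≤ dist q y

namespace IsNearestSubset

variable {M : Type*} [Dist M] {S P : Finset M} {q x : M}

theorem mem_of_card_filter_dist_le (hS : IsNearestSubset S P q) (hx : x ∈ P)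
    (hcard : (P.filter fun y => dist q y ≤ dist q x).card ≤ S.card) : x ∈ S := by
  by_contra hxS
  have hsub : S ⊆ P.filter fun y => dist q y ≤ dist q x := fun y hy =>
    Finset.mem_filter.2 ⟨hS.1 hy, hS.2 y hy x hx hxS⟩
  have hxF : x ∈ P.filter fun y => dist q y ≤ dist q x := Finset.mem_filter.2 ⟨hx, le_rfl⟩
  rw [← Finset.eq_of_subset_of_card_le hsub hcard] at hxF
  exact hxS hxF

theorem dist_le_of_card_le_card_filter (hS : IsNearestSubset S P q) {c : ℝ}
    (hcard : S.card ≤ (P.filter fun y => dist q y ≤ c).card) (hx : x ∈ S) : dist q x ≤ c := by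
  by_contra! hcx
  have hsub : (P.filter fun y => dist q y ≤ c) ⊆ S := by
    intro y hy
    obtain ⟨hyP, hyc⟩ := Finset.mem_filter.1 hy
    by_contra hyS
    exact (hcx.trans_le (hS.2 x hx y hyP hyS)).not_ge hyc
  rw [← Finset.eq_of_subset_of_card_le hsub hcard] at hx
  exact hcx.not_ge (Finset.mem_filter.1 hx).2

end IsNearestSubset

theorem IsKNNRadius.le_of_le_card_filter {M : Type*} [MetricSpace M] {P : Finset M} {k : ℕ}
    {q : M} {r c : ℝ} (hr : IsKNNRadius P k q r)
    (hcard : k ≤ (P.filter fun y => dist q y ≤ c).card) : r ≤ c := by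
  obtain ⟨T, hTP, rfl, hT, -, x, hx, rfl⟩ := hr
  exact IsNearestSubset.dist_le_of_card_le_card_filter ⟨hTP, hT⟩ hcard hx

/-- The extremal point set for the query `0`, whose nearest neighbor is `1 - ε / 2`. The parameter
`C`, taken inside `(1 - ε / 2, 1)`, only serves to adjust the number of points. -/
noncomputable def tightConfiguration (ε : ℝ) (C : Finset ℝ) : Finset ℝ :=
  insert (-1) (insert (3 - 2 * ε) (insert (1 - ε / 2) C))

namespace tightConfiguration

variable {ε : ℝ} {C : Finset ℝ}

theorem mem_iff {x : ℝ} :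
    x ∈ tightConfiguration ε C ↔ x = -1 ∨ x = 3 - 2 * ε ∨ x = 1 - ε / 2 ∨ x ∈ C := by
  simp only [tightConfiguration, Finset.mem_insert]

theorem card_eq (hε0 : 0 < ε) (hε1 : ε < 1) (hC : (C : Set ℝ) ⊆ Ioo (1 - ε / 2) 1) :
    (tightConfiguration ε C).card = C.card + 3 := by
  have hnear : 1 - ε / 2 ∉ C := fun h => (hC h).1.false
  have hfar : 3 - 2 * ε ∉ insert (1 - ε / 2) C := by
    rw [Finset.mem_insert]
    rintro (h | h)
    · linarith
    · linarith [(hC h).2]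
  have hneg : -1 ∉ insert (3 - 2 * ε) (insert (1 - ε / 2) C) := by
    simp only [Finset.mem_insert]
    rintro (h | h | h)
    · linarith
    · linarith
    · linarith [(hC h).1]
  rw [tightConfiguration, Finset.card_insert_of_notMem hneg, Finset.card_insert_of_notMem hfar,
    Finset.card_insert_of_notMem hnear]

theorem dist_zero_near_lt (hε0 : 0 < ε) (hε1 : ε < 1) (hC : (C : Set ℝ) ⊆ Ioo (1 - ε / 2) 1)
    {y : ℝ} (hy : y ∈ tightConfiguration ε C) (hne : y ≠ 1 - ε / 2) :
    dist 0 (1 - ε / 2) < dist 0 y := by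
  rw [dist_zero_left, dist_zero_left, Real.norm_of_nonneg (by linarith), Real.norm_eq_abs, lt_abs]
  rcases mem_iff.1 hy with rfl | rfl | rfl | hyC
  · right; linarith
  · left; linarith
  · exact absurd rfl hne
  · exact Or.inl (hC hyC).1

theorem dist_zero_le_one (hε0 : 0 < ε) (hε1 : ε < 1) (hC : (C : Set ℝ) ⊆ Ioo (1 - ε / 2) 1)
    {x : ℝ} (hx : x ∈ tightConfiguration ε C) (hne : x ≠ 3 - 2 * ε) : dist 0 x ≤ 1 := by
  rw [dist_zero_left, Real.norm_eq_abs, abs_le]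
  rcases mem_iff.1 hx with rfl | rfl | rfl | hxC
  · norm_num
  · exact absurd rfl hne
  · constructor <;> linarith
  · exact ⟨by linarith [(hC hxC).1], (hC hxC).2.le⟩

theorem dist_near_far_lt (hε0 : 0 < ε) (hε1 : ε < 1) :
    dist (1 - ε / 2) (3 - 2 * ε) < dist (1 - ε / 2) (-1) := by
  rw [Real.dist_eq, Real.dist_eq, abs_of_neg (by linarith), abs_of_pos (by linarith)]
  linarith

theorem radius_le_one (hε0 : 0 < ε) (hε1 : ε < 1) (hC : (C : Set ℝ) ⊆ Ioo (1 - ε / 2) 1) {r : ℝ}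
    (hr : IsKNNRadius (tightConfiguration ε C) (C.card + 2) 0 r) : r ≤ 1 := by
  refine hr.le_of_le_card_filter ?_
  calc C.card + 2 = ((tightConfiguration ε C).erase (3 - 2 * ε)).card := by
        rw [Finset.card_erase_of_mem (mem_iff.2 (by simp)), card_eq hε0 hε1 hC]; rfl
    _ ≤ _ := Finset.card_le_card fun x hx => by
        obtain ⟨hne, hxP⟩ := Finset.mem_erase.1 hx
        exact Finset.mem_filter.2 ⟨hxP, dist_zero_le_one hε0 hε1 hC hxP hne⟩

theorem far_mem (hε0 : 0 < ε) (hε1 : ε < 1) (hC : (C : Set ℝ) ⊆ Ioo (1 - ε / 2) 1)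
    {S : Finset ℝ} (hS : IsNearestSubset S (tightConfiguration ε C) (1 - ε / 2))
    (hcard : S.card = C.card + 2) : 3 - 2 * ε ∈ S := by
  refine hS.mem_of_card_filter_dist_le (mem_iff.2 (by simp)) ?_
  calc _ ≤ ((tightConfiguration ε C).erase (-1)).card := Finset.card_le_card fun x hx => by
        obtain ⟨hxP, hxle⟩ := Finset.mem_filter.1 hx
        refine Finset.mem_erase.2 ⟨?_, hxP⟩
        rintro rfl
        exact (dist_near_far_lt hε0 hε1).not_ge hxle
    _ = S.card := by
        rw [Finset.card_erase_of_mem (mem_iff.2 (by simp)), card_eq hε0 hε1 hC, hcard]; rfl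

end tightConfiguration

/-- tightness of the `3`-approximation analysis.
For every `ε ∈ (0,1)` and `k ≥ 2` there are `k+1` points on the real line
and a query `q` such that any set of `k` nearest neighbors of the (unique)
nearest neighbor of `q` contains a point at distance more than
`3(1-ε)·r` from `q`. -/
theorem three_approx_tightness (ε : ℝ) (hε0 : 0 < ε) (hε1 : ε < 1)
    (k : ℕ) (hk : 2 ≤ k) :
    ∃ P : Finset ℝ, P.card = k + 1 ∧
      ∃ q : ℝ, ∃ pstar ∈ P,
        (∀ y ∈ P, y ≠ pstar → dist q pstar < dist q y) ∧
        ∀ S : Finset ℝ, S ⊆ P → S.card = k →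
          (∀ x ∈ S, ∀ y ∈ P, y ∉ S → dist pstar x ≤ dist pstar y) →
          ∀ r : ℝ, IsKNNRadius P k q r →
            ∃ x₀ ∈ S, dist q x₀ > 3 * (1 - ε) * r := by
  obtain ⟨m, rfl⟩ := Nat.exists_eq_add_of_le' hk
  have hinf : (Ioo (1 - ε / 2) 1).Infinite := Ioo_infinite (by linarith)
  obtain ⟨C, hC, rfl⟩ := hinf.exists_subset_card_eq m
  refine ⟨tightConfiguration ε C, tightConfiguration.card_eq hε0 hε1 hC, 0, 1 - ε / 2,
    tightConfiguration.mem_iff.2 (by simp),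
    fun y => tightConfiguration.dist_zero_near_lt hε0 hε1 hC, fun S hSP hSk hS r hr => ?_⟩
  refine ⟨3 - 2 * ε, tightConfiguration.far_mem hε0 hε1 hC ⟨hSP, hS⟩ hSk, ?_⟩
  have hr1 : r ≤ 1 := tightConfiguration.radius_le_one hε0 hε1 hC hr
  calc 3 * (1 - ε) * r ≤ 3 * (1 - ε) := mul_le_of_le_one_right (by linarith) hr1
    _ < 3 - 2 * ε := by linarith
    _ = dist 0 (3 - 2 * ε) := by rw [dist_zero_left, Real.norm_of_nonneg (by linarith)]
end

section
/- For every real number c > 1 there exists a constant a > 0 such that the following holds for all positive integers d, n, k, B with n ≥ 2 and k ≤ n. For every set P of n points in {0,1}ᵈ there exists a family 𝓑 of at most n^a · d² · ⌈k/B⌉ subsets of P, each of cardinality at most B, such that for every q ∈ {0,1}ᵈ there exist a subfamily 𝓒 ⊆ 𝓑 with |𝓒| ≤ ⌈k/B⌉ and a set S ⊆ ⋃𝓒 with |S| = k such that hammingDist(q, x) ≤ c·r for all x ∈ S, where r is the k-nearest-neighbor radius of q in P under the Hamming metric. -/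
/-- `r` is the `k`-nearest-neighbor radius of `q` in the finite set `P` of
points of Hamming space `{0,1}ᵈ`. -/
def IsHammingKNNRadius {d : ℕ} (P : Finset (Fin d → Bool)) (k : ℕ)
    (q : Fin d → Bool) (r : ℕ) : Prop :=
  ∃ T ⊆ P, T.card = k ∧
    (∀ x ∈ T, ∀ y ∈ P, y ∉ T → hammingDist q x ≤ hammingDist q y) ∧
    (∀ x ∈ T, hammingDist q x ≤ r) ∧ (∃ x ∈ T, hammingDist q x = r)

/-!
For a random parity of `t` sampled coordinates, the expected product of the signs of `q` and `x` is
`(1 - D / d) ^ t`, where `D` is their Hamming distance. For `r < d / c` a suitable `t` separates the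
values of this function on `D ≤ r` from those on `D > c * r` by a gap depending only on `c`. By
Hoeffding's inequality, averaging `O(log n)` such parities is accurate enough, simultaneously for
all points of `P`, with probability at least one half for each query `q`; hence greedily at most
`d + 1` samples are good for all `2 ^ d` queries together. For a fixed sample the resulting set of
candidates depends on `q` only through its `O(log n)` signs, which leaves `n ^ O(1) * (d + 1)`
candidate sets for each radius. From each of them `k` points are cut into `⌈k / B⌉` blocks.
-/

open MeasureTheory ProbabilityTheory
open scoped Finset

section Covering

variable {Ω Q : Type*} [MeasurableSpace Ω]

theorem exists_card_le_two_mul_card_filter (μ : Measure Ω) [IsProbabilityMeasure μ]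
    {G : Q → Set Ω} (hG : ∀ q, MeasurableSet (G q)) (hμ : ∀ q, 1 / 2 ≤ μ.real (G q))
    [∀ ω, DecidablePred fun q ↦ ω ∈ G q] (X : Finset Q) :
    ∃ ω, #X ≤ 2 * #{q ∈ X | ω ∈ G q} := by
  have hcount : ∀ ω, (#{q ∈ X | ω ∈ G q} : ℝ) = ∑ q ∈ X, (G q).indicator 1 ω := fun ω ↦ by
    simp [Set.indicator_apply]
  have hint : ∀ q ∈ X, Integrable ((G q).indicator (1 : Ω → ℝ)) μ := fun q _ ↦
    (integrable_const 1).indicator (hG q)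
  obtain ⟨ω, hω⟩ := exists_integral_le (integrable_finsetSum X hint)
  refine ⟨ω, ?_⟩
  have hmean : (#X : ℝ) / 2 ≤ ∫ ω, ∑ q ∈ X, (G q).indicator 1 ω ∂μ := by
    rw [integral_finsetSum X hint]
    simp only [integral_indicator_one (hG _)]
    simpa [div_eq_mul_inv] using X.card_nsmul_le_sum _ _ fun q _ ↦ hμ q
  have : (#X : ℝ) ≤ 2 * #{q ∈ X | ω ∈ G q} := by linarith [hcount ω]
  exact_mod_cast this

theorem exists_finset_cover (μ : Measure Ω) [IsProbabilityMeasure μ]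
    {G : Q → Set Ω} (hG : ∀ q, MeasurableSet (G q)) (hμ : ∀ q, 1 / 2 ≤ μ.real (G q))
    {l : ℕ} (X : Finset Q) (hX : #X < 2 ^ l) :
    ∃ F : Finset Ω, #F ≤ l ∧ ∀ q ∈ X, ∃ ω ∈ F, ω ∈ G q := by
  classical
  induction l generalizing X with
  | zero => exact ⟨∅, by simp, by simp_all⟩
  | succ l ih =>
    obtain ⟨ω, hω⟩ := exists_card_le_two_mul_card_filter μ hG hμ X
    have hsplit := X.card_filter_add_card_filter_not fun q ↦ ω ∈ G q
    obtain ⟨F, hF, hcov⟩ := ih {q ∈ X | ω ∉ G q} (by rw [pow_succ] at hX; omega)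
    refine ⟨insert ω F, (F.card_insert_le ω).trans (by omega), fun q hq ↦ ?_⟩
    by_cases hqω : ω ∈ G q
    · exact ⟨ω, F.mem_insert_self ω, hqω⟩
    · obtain ⟨ω', hω'F, hω'⟩ := hcov q (by simp [hq, hqω])
      exact ⟨ω', Finset.mem_insert_of_mem hω'F, hω'⟩

end Covering

section Sampling

variable {W X : Type*} [MeasurableSpace W] {μ : Measure W}

/-- The expected agreement of the signs that a `μ`-random `w` assigns to `q` and `x`. -/
noncomputable def signCorrelation (μ : Measure W) (s : W → X → ℤˣ) (q x : X) : ℝ :=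
  ∫ w, ((s w q : ℤ) : ℝ) * ((s w x : ℤ) : ℝ) ∂μ

theorem abs_intCast_units (u : ℤˣ) : |((u : ℤ) : ℝ)| = 1 := by
  rcases Int.units_eq_one_or u with rfl | rfl <;> simp

theorem measurable_intCast_units : Measurable fun u : ℤˣ ↦ ((u : ℤ) : ℝ) :=
  measurable_from_top.comp (comap_measurable Units.val)

/-- The empirical estimate of the correlation of `x` with a query, from `m` samples `ω`. The query
enters only through its vector of signs `g`, so that a fixed `ω` has just `2 ^ m` estimates. -/
noncomputable def empiricalCorrelation {m : ℕ} (s : W → X → ℤˣ) (ω : Fin m → W)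
    (g : Fin m → ℤˣ) (x : X) : ℝ :=
  (∑ j, ((g j : ℤ) : ℝ) * ((s (ω j) x : ℤ) : ℝ)) / m

/-- The samples whose estimates of the correlations of `q` with the points of `P` are all correct
up to an error less than `ε`. -/
def accurateSamples (μ : Measure W) (s : W → X → ℤˣ) (P : Finset X) (m : ℕ) (ε : ℝ) (q : X) :
    Set (Fin m → W) :=
  {ω | ∀ x ∈ P, |empiricalCorrelation s ω (fun j ↦ s (ω j) q) x - signCorrelation μ s q x| < ε}

theorem measurableSet_accurateSamples {s : W → X → ℤˣ} (hs : ∀ x, Measurable (s · x))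
    (P : Finset X) (m : ℕ) (ε : ℝ) (q : X) :
    MeasurableSet (accurateSamples μ s P m ε q) := by
  have hsign (x : X) (j : Fin m) : Measurable fun ω : Fin m → W ↦ ((s (ω j) x : ℤ) : ℝ) :=
    measurable_intCast_units.comp ((hs x).comp (measurable_pi_apply j))
  have hestimate (x : X) :
      Measurable fun ω : Fin m → W ↦ empiricalCorrelation s ω (fun j ↦ s (ω j) q) x :=
    (Finset.measurable_fun_sum _ fun j _ ↦ (hsign q j).mul (hsign x j)).div_const _
  simp only [accurateSamples, Set.ofPred_forall]
  exact P.measurableSet_biInter fun x _ ↦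
    measurableSet_lt ((hestimate x).sub_const _).abs measurable_const

variable [IsProbabilityMeasure μ]

theorem hasSubgaussianMGF_sum_pi {f : W → ℝ} (hf : Measurable f) (hf1 : ∀ w, |f w| ≤ 1) (m : ℕ) :
    HasSubgaussianMGF (fun ω : Fin m → W ↦ ∑ j, (f (ω j) - μ[f])) m (.pi fun _ ↦ μ) := by
  have hcentered : HasSubgaussianMGF (fun w ↦ f w - μ[f]) 1 μ := by
    have hIcc : ∀ᵐ w ∂μ, f w ∈ Set.Icc (-1) 1 := .of_forall fun w ↦ abs_le.1 (hf1 w)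
    have hwidth : (‖(1 : ℝ) - -1‖₊ / 2) ^ 2 = 1 := by norm_num [← NNReal.coe_inj]
    exact hwidth ▸ hasSubgaussianMGF_of_mem_Icc hf.aemeasurable hIcc
  have hindep : iIndepFun (fun (j : Fin m) (ω : Fin m → W) ↦ f (ω j) - μ[f]) (.pi fun _ ↦ μ) :=
    iIndepFun_pi (X := fun _ w ↦ f w - μ[f]) fun _ ↦ (hf.sub_const _).aemeasurable
  have hcoord (j : Fin m) :
      HasSubgaussianMGF (fun ω : Fin m → W ↦ f (ω j) - μ[f]) 1 (.pi fun _ ↦ μ) := by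
    refine HasSubgaussianMGF.of_map (X := fun w ↦ f w - μ[f]) (Y := fun ω : Fin m → W ↦ ω j)
      (measurable_pi_apply j).aemeasurable ?_
    rwa [(measurePreserving_eval (fun _ ↦ μ) j).map_eq]
  simpa using HasSubgaussianMGF.sum_of_iIndepFun hindep (s := .univ) fun j _ ↦ hcoord j

theorem measureReal_pi_le_abs_mean_sub_le {f : W → ℝ} (hf : Measurable f) (hf1 : ∀ w, |f w| ≤ 1)
    (m : ℕ) {ε : ℝ} (hε : 0 ≤ ε) :
    (Measure.pi fun _ : Fin m ↦ μ).real {ω | ε ≤ |(∑ j, f (ω j)) / m - μ[f]|} ≤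
      2 * Real.exp (-(m * ε ^ 2 / 2)) := by
  rcases m.eq_zero_or_pos with rfl | hm
  · exact measureReal_le_one.trans (by norm_num)
  have hm' : (0 : ℝ) < m := by exact_mod_cast hm
  set ν := Measure.pi fun _ : Fin m ↦ μ
  set Y : (Fin m → W) → ℝ := fun ω ↦ ∑ j, (f (ω j) - μ[f]) with hY
  have hdev : ∀ ω : Fin m → W, (∑ j, f (ω j)) / m - μ[f] = Y ω / m := fun ω ↦ by
    simp only [hY, Finset.sum_sub_distrib, Finset.sum_const, Finset.card_univ, Fintype.card_fin,
      nsmul_eq_mul]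
    field_simp
  have hsub : HasSubgaussianMGF Y m ν := hasSubgaussianMGF_sum_pi hf hf1 m
  have hexp : -(m * ε) ^ 2 / (2 * ((m : NNReal) : ℝ)) = -(m * ε ^ 2 / 2) := by
    rw [NNReal.coe_natCast]
    field_simp
  calc ν.real {ω | ε ≤ |(∑ j, f (ω j)) / m - μ[f]|}
      ≤ ν.real ({ω | m * ε ≤ Y ω} ∪ {ω | m * ε ≤ (-Y) ω}) := by
        refine measureReal_mono fun ω hω ↦ ?_
        rw [Set.mem_ofPred_eq, hdev, abs_div, Nat.abs_cast, le_div_iff₀' hm', le_abs] at hω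
        exact hω
    _ ≤ ν.real {ω | m * ε ≤ Y ω} + ν.real {ω | m * ε ≤ (-Y) ω} := measureReal_union_le _ _
    _ ≤ Real.exp (-(m * ε) ^ 2 / (2 * ((m : NNReal) : ℝ))) +
          Real.exp (-(m * ε) ^ 2 / (2 * ((m : NNReal) : ℝ))) :=
        add_le_add (hsub.measure_ge_le (by positivity)) (hsub.neg.measure_ge_le (by positivity))
    _ = 2 * Real.exp (-(m * ε ^ 2 / 2)) := by rw [hexp, two_mul]

theorem half_le_measureReal_accurateSamples {s : W → X → ℤˣ} (hs : ∀ x, Measurable (s · x))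
    (P : Finset X) {m : ℕ} {ε : ℝ} (hε : 0 ≤ ε)
    (hm : #P * (2 * Real.exp (-(m * ε ^ 2 / 2))) ≤ 1 / 2) (q : X) :
    1 / 2 ≤ (Measure.pi fun _ ↦ μ).real (accurateSamples μ s P m ε q) := by
  let bad (x : X) : Set (Fin m → W) :=
    {ω | ε ≤ |empiricalCorrelation s ω (fun j ↦ s (ω j) q) x - signCorrelation μ s q x|}
  have hbad (x : X) : (Measure.pi fun _ ↦ μ).real (bad x) ≤ 2 * Real.exp (-(m * ε ^ 2 / 2)) :=
    measureReal_pi_le_abs_mean_sub_le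
      ((measurable_intCast_units.comp (hs q)).mul (measurable_intCast_units.comp (hs x)))
      (fun w ↦ by simp [abs_mul, abs_intCast_units]) m hε
  have hcompl : (accurateSamples μ s P m ε q)ᶜ = ⋃ x ∈ P, bad x := by
    ext ω
    simp [accurateSamples, bad]
  have hunion : (Measure.pi fun _ ↦ μ).real (accurateSamples μ s P m ε q)ᶜ ≤ 1 / 2 := calc
    _ ≤ ∑ x ∈ P, (Measure.pi fun _ ↦ μ).real (bad x) := hcompl ▸ measureReal_biUnion_finset_le P bad
    _ ≤ #P * (2 * Real.exp (-(m * ε ^ 2 / 2))) := by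
      simpa using P.sum_le_card_nsmul _ _ fun x _ ↦ hbad x
    _ ≤ 1 / 2 := hm
  rw [probReal_compl_eq_one_sub (measurableSet_accurateSamples hs P m ε q)] at hunion
  linarith

theorem signCorrelation_pi_prod (s : W → X → ℤˣ) (q x : X) (t : ℕ) :
    signCorrelation (.pi fun _ : Fin t ↦ μ) (fun w x ↦ ∏ j, s (w j) x) q x =
      signCorrelation μ s q x ^ t := by
  simp only [signCorrelation, Units.coe_prod, Int.cast_prod, ← Finset.prod_mul_distrib]
  rw [integral_fintype_prod_eq_pow fun w ↦ ((s w q : ℤ) : ℝ) * ((s w x : ℤ) : ℝ), Fintype.card_fin]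

theorem exists_finset_approx_signCorrelation {s : W → X → ℤˣ} (hs : ∀ x, Measurable (s · x))
    (P Q : Finset X) {l m : ℕ} {ε : ℝ} (hε : 0 ≤ ε) (hQ : #Q < 2 ^ l)
    (hm : #P * (2 * Real.exp (-(m * ε ^ 2 / 2))) ≤ 1 / 2) :
    ∃ 𝓕 : Finset (X → ℝ), #𝓕 ≤ l * 2 ^ m ∧
      ∀ q ∈ Q, ∃ f ∈ 𝓕, ∀ x ∈ P, |f x - signCorrelation μ s q x| < ε := by
  classical
  obtain ⟨F, hF, hcover⟩ := exists_finset_cover _ (measurableSet_accurateSamples hs P m ε)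
    (half_le_measureReal_accurateSamples (μ := μ) hs P hε hm) Q hQ
  refine ⟨(F ×ˢ .univ).image fun p ↦ empiricalCorrelation s p.1 p.2, ?_, fun q hq ↦ ?_⟩
  · calc #((F ×ˢ .univ).image fun p ↦ empiricalCorrelation s p.1 p.2)
        ≤ #F * 2 ^ m := Finset.card_image_le.trans (by simp)
      _ ≤ l * 2 ^ m := by gcongr
  · obtain ⟨ω, hωF, hω⟩ := hcover q hq
    exact ⟨_, Finset.mem_image.2 ⟨(ω, fun j ↦ s (ω j) q), by simp [hωF], rfl⟩, hω⟩

end Sampling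

theorem exists_pow_mem_Ico {u : ℝ} (hu0 : 0 < u) (hu1 : u < 1) :
    ∃ t : ℕ, (1 - u) ^ t ∈ Set.Ico ((1 - u) / 2) (1 / 2) := by
  obtain ⟨t, hlt, hle⟩ := exists_nat_pow_near_of_lt_one (x := 1 / 2) (y := 1 - u)
    (by norm_num) (by norm_num) (by linarith) (by linarith)
  refine ⟨t + 1, ?_, hlt⟩
  rw [pow_succ']
  nlinarith

theorem exists_gap_le_pow_sub_pow {c : ℝ} (hc : 1 < c) :
    ∃ δ > 0, ∀ u, 0 < u → c * u < 1 → ∃ t : ℕ, (1 - c * u) ^ t + 2 * δ ≤ (1 - u) ^ t := by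
  have hcinv : c⁻¹ < 1 := inv_lt_one_of_one_lt₀ hc
  have hhalf : (1 / 2 : ℝ) ^ (c - 1) < 1 :=
    Real.rpow_lt_one (by norm_num) (by norm_num) (by linarith)
  refine ⟨(1 - c⁻¹) / 4 * (1 - (1 / 2 : ℝ) ^ (c - 1)),
    mul_pos (by linarith) (by linarith), fun u hu hcu ↦ ?_⟩
  have huc : u < c⁻¹ := by rwa [lt_inv_comm₀ hu (by linarith), ← one_div, lt_div_iff₀ hu]
  obtain ⟨t, hlow, hhigh⟩ := exists_pow_mem_Ico hu (huc.trans hcinv)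
  refine ⟨t, ?_⟩
  set A := (1 - u) ^ t
  have hA0 : 0 < A := by linarith
  have hfar : (1 - c * u) ^ t ≤ A * (1 / 2 : ℝ) ^ (c - 1) := calc
    (1 - c * u) ^ t ≤ ((1 - u) ^ c) ^ t := by
      have hbernoulli := one_add_mul_self_le_rpow_one_add (s := -u) (by linarith) hc.le
      simp only [mul_neg, ← sub_eq_add_neg] at hbernoulli
      exact pow_le_pow_left₀ (by linarith) hbernoulli t
    _ = A ^ c := (Real.rpow_pow_comm (by linarith) c t)
    _ = A * A ^ (c - 1) := by rw [← Real.rpow_one_add' hA0.le (by linarith), add_sub_cancel]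
    _ ≤ A * (1 / 2 : ℝ) ^ (c - 1) := by
      have : 0 ≤ c - 1 := by linarith
      gcongr
  nlinarith

theorem exists_sample_size {ε : ℝ} (hε : 0 < ε) :
    ∃ C : ℕ, ∀ n : ℕ, 2 ≤ n → ∃ m : ℕ, 2 ^ m ≤ n ^ C ∧
      n * (2 * Real.exp (-(m * ε ^ 2 / 2))) ≤ 1 / 2 := by
  obtain ⟨K, hK⟩ := exists_nat_ge (6 / ε ^ 2)
  refine ⟨2 * K, fun n hn ↦ ?_⟩
  set L := Nat.log 2 n + 1 with hL
  refine ⟨L * K, ?_, ?_⟩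
  · rw [pow_mul, pow_mul]
    refine Nat.pow_le_pow_left ?_ K
    calc 2 ^ L = 2 ^ Nat.log 2 n * 2 := pow_succ _ _
      _ ≤ n * n := Nat.mul_le_mul (Nat.pow_log_le_self 2 (by omega)) hn
      _ = n ^ 2 := (sq n).symm
  have hexponent : (3 * L : ℝ) ≤ (L * K : ℕ) * ε ^ 2 / 2 := by
    rw [div_le_iff₀ (by positivity)] at hK
    push_cast
    nlinarith [(Nat.cast_nonneg L : (0 : ℝ) ≤ L)]
  have htwo : (2 : ℝ) ≤ Real.exp 1 := by linarith [Real.add_one_le_exp (1 : ℝ)]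
  have hnL : (n : ℝ) ≤ 2 ^ L := by exact_mod_cast (Nat.lt_pow_succ_log_self one_lt_two n).le
  have hgrowth : 4 * (n : ℝ) ≤ Real.exp ((L * K : ℕ) * ε ^ 2 / 2) := calc
    4 * (n : ℝ) ≤ (2 ^ L) ^ 2 * 2 ^ L := by
      have : (2 : ℝ) ≤ 2 ^ L := le_self_pow₀ one_le_two (Nat.succ_ne_zero _)
      gcongr
      nlinarith
    _ = 2 ^ (3 * L) := by ring
    _ ≤ Real.exp 1 ^ (3 * L) := by gcongr
    _ = Real.exp (3 * L) := by rw [← Real.exp_nat_mul]; push_cast; ring_nf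
    _ ≤ _ := Real.exp_le_exp.2 hexponent
  rw [Real.exp_neg, ← mul_assoc, ← div_eq_mul_inv, div_le_iff₀ (Real.exp_pos _)]
  linarith

section Hamming

variable {ι : Type*}

/-- The random sign of `x` attached to a pair `(i, b)`: the sign `(-1) ^ x i` of the `i`th
coordinate if the flag `b` is set, and `1` otherwise. The random flag halves the effect of a
differing coordinate, which makes the correlation `1 - D / d` instead of `1 - 2 * D / d`. -/
def coordSign (p : ι × Bool) (x : ι → Bool) : ℤˣ :=
  if p.2 && x p.1 then -1 else 1

variable [Fintype ι]

theorem hammingDist_le_card (q x : ι → Bool) : (hammingDist q x : ℝ) ≤ Fintype.card ι := by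
  exact_mod_cast hammingDist_le_card_fintype

theorem sum_coordSign_mul (q x : ι → Bool) :
    ∑ p : ι × Bool, ((coordSign p q : ℤ) : ℝ) * ((coordSign p x : ℤ) : ℝ) =
      2 * (Fintype.card ι - hammingDist q x) := by
  have hcoord (i : ι) : ∑ b : Bool,
      ((coordSign (i, b) q : ℤ) : ℝ) * ((coordSign (i, b) x : ℤ) : ℝ) =
        2 * (1 - if q i ≠ x i then 1 else 0) := by
    cases hq : q i <;> cases hx : x i <;> norm_num [coordSign, hq, hx]
  simp only [Fintype.sum_prod_type, hcoord, ← Finset.mul_sum, Finset.sum_sub_distrib,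
    Finset.sum_boole, Finset.sum_const, Finset.card_univ, nsmul_one, hammingDist]

/-- The points of `P` at Hamming distance at most the real radius `ρ` from `q`. -/
noncomputable def hammingBall (P : Finset (ι → Bool)) (q : ι → Bool) (ρ : ℝ) : Finset (ι → Bool) :=
  {x ∈ P | (hammingDist q x : ℝ) ≤ ρ}

theorem mem_hammingBall {P : Finset (ι → Bool)} {q x : ι → Bool} {ρ : ℝ} :
    x ∈ hammingBall P q ρ ↔ x ∈ P ∧ (hammingDist q x : ℝ) ≤ ρ :=
  Finset.mem_filter

theorem hammingBall_mono (P : Finset (ι → Bool)) (q : ι → Bool) {ρ σ : ℝ} (h : ρ ≤ σ) :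
    hammingBall P q ρ ⊆ hammingBall P q σ :=
  Finset.monotone_filter_right P fun _ _ hx ↦ hx.trans h

theorem hammingBall_subset_min_card (P : Finset (ι → Bool)) (q : ι → Bool) (ρ : ℝ) :
    hammingBall P q ρ ⊆ hammingBall P q (min ρ (Fintype.card ι)) := fun x hx ↦ by
  obtain ⟨hxP, hxρ⟩ := mem_hammingBall.1 hx
  exact mem_hammingBall.2 ⟨hxP, le_min hxρ (hammingDist_le_card q x)⟩

theorem hammingBall_mul_max_subset (P : Finset (ι → Bool)) (q : ι → Bool) {c : ℝ} (hc : 1 ≤ c)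
    (r : ℕ) : hammingBall P q (c * max (r : ℝ) (2 * c)⁻¹) ⊆ hammingBall P q (c * r) := by
  have hhalf : c * (2 * c)⁻¹ = 1 / 2 := by field_simp
  rcases r.eq_zero_or_pos with rfl | hr
  · intro x hx
    obtain ⟨hxP, hxr⟩ := mem_hammingBall.1 hx
    rw [Nat.cast_zero, max_eq_right (by positivity), hhalf] at hxr
    have hzero : hammingDist q x = 0 :=
      Nat.lt_one_iff.1 (by exact_mod_cast hxr.trans_lt one_half_lt_one)
    exact mem_hammingBall.2 ⟨hxP, by simp [hzero]⟩
  · have hr1 : (1 : ℝ) ≤ r := by exact_mod_cast hr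
    have hle : (2 * c)⁻¹ ≤ (r : ℝ) := (inv_le_one_of_one_le₀ (by linarith)).trans hr1
    rw [max_eq_left hle]

/-- A family of subsets of `P` that, for every query `q`, has a member containing all points of `P`
within distance `r` of `q` and none at distance more than `R`. -/
def IsSeparatingFamily (P : Finset (ι → Bool)) (r R : ℝ) (𝓦 : Finset (Finset (ι → Bool))) : Prop :=
  (∀ W ∈ 𝓦, W ⊆ P) ∧ ∀ q, ∃ W ∈ 𝓦, hammingBall P q r ⊆ W ∧ W ⊆ hammingBall P q R

variable [Nonempty ι]

theorem signCorrelation_coordSign [MeasurableSpace ι] [MeasurableSingletonClass ι]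
    (q x : ι → Bool) :
    signCorrelation (PMF.uniformOfFintype (ι × Bool)).toMeasure coordSign q x =
      1 - (hammingDist q x : ℝ) / Fintype.card ι := by
  have hcard : (Fintype.card (ι × Bool) : ℝ) = Fintype.card ι * 2 := by simp
  simp only [signCorrelation, PMF.integral_eq_sum, PMF.uniformOfFintype_apply, smul_eq_mul,
    ENNReal.toReal_inv, ENNReal.toReal_natCast]
  rw [← Finset.mul_sum, sum_coordSign_mul, hcard]
  field_simp

theorem exists_finset_approx_one_sub_hammingDist_pow (P : Finset (ι → Bool)) (t : ℕ)
    {m : ℕ} {ε : ℝ} (hε : 0 ≤ ε) (hm : #P * (2 * Real.exp (-(m * ε ^ 2 / 2))) ≤ 1 / 2) :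
    ∃ 𝓕 : Finset ((ι → Bool) → ℝ), #𝓕 ≤ (Fintype.card ι + 1) * 2 ^ m ∧ ∀ q, ∃ f ∈ 𝓕, ∀ x ∈ P,
      |f x - (1 - (hammingDist q x : ℝ) / Fintype.card ι) ^ t| < ε := by
  classical
  let : MeasurableSpace ι := ⊤
  have : DiscreteMeasurableSpace ι := ⟨fun _ ↦ trivial⟩
  obtain ⟨𝓕, hcard, h𝓕⟩ := exists_finset_approx_signCorrelation
    (μ := .pi fun _ : Fin t ↦ (PMF.uniformOfFintype (ι × Bool)).toMeasure)
    (s := fun w x ↦ ∏ j, coordSign (w j) x) (fun _ ↦ .of_discrete) P .univ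
    (l := Fintype.card ι + 1) hε (by simp [pow_succ]) hm
  refine ⟨𝓕, hcard, fun q ↦ ?_⟩
  simpa only [signCorrelation_pi_prod, signCorrelation_coordSign] using h𝓕 q (Finset.mem_univ q)

theorem exists_isSeparatingFamily_of_gap (P : Finset (ι → Bool)) {t m : ℕ} {δ r R : ℝ}
    (hδ : 0 ≤ δ) (hr : r ≤ Fintype.card ι)
    (hgap : (1 - R / Fintype.card ι) ^ t + 2 * δ ≤ (1 - r / Fintype.card ι) ^ t)
    (hm : #P * (2 * Real.exp (-(m * δ ^ 2 / 2))) ≤ 1 / 2) :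
    ∃ 𝓦, IsSeparatingFamily P r R 𝓦 ∧ #𝓦 ≤ (Fintype.card ι + 1) * 2 ^ m := by
  classical
  have hd : (0 : ℝ) < Fintype.card ι := by exact_mod_cast Fintype.card_pos
  obtain ⟨𝓕, hcard, h𝓕⟩ := exists_finset_approx_one_sub_hammingDist_pow P t hδ hm
  let superlevel (f : (ι → Bool) → ℝ) : Finset (ι → Bool) :=
    {x ∈ P | (1 - r / Fintype.card ι) ^ t - δ ≤ f x}
  refine ⟨𝓕.image superlevel,
    ⟨Finset.forall_mem_image.2 fun f _ ↦ Finset.filter_subset _ _, fun q ↦ ?_⟩,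
    Finset.card_image_le.trans hcard⟩
  obtain ⟨f, hf, hfq⟩ := h𝓕 q
  refine ⟨superlevel f, Finset.mem_image_of_mem _ hf, fun x hx ↦ ?_, fun x hx ↦ ?_⟩
  · obtain ⟨hxP, hnear⟩ := mem_hammingBall.1 hx
    have hpow : (1 - r / Fintype.card ι) ^ t ≤ (1 - (hammingDist q x : ℝ) / Fintype.card ι) ^ t :=
      pow_le_pow_left₀ (sub_nonneg.2 ((div_le_one hd).2 hr)) (by gcongr) t
    exact Finset.mem_filter.2 ⟨hxP, by linarith [(abs_lt.1 (hfq x hxP)).1]⟩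
  · obtain ⟨hxP, hfx⟩ := Finset.mem_filter.1 hx
    refine mem_hammingBall.2 ⟨hxP, ?_⟩
    by_contra! hfar
    have hpow : (1 - (hammingDist q x : ℝ) / Fintype.card ι) ^ t ≤ (1 - R / Fintype.card ι) ^ t :=
      pow_le_pow_left₀ (sub_nonneg.2 ((div_le_one hd).2 (hammingDist_le_card q x))) (by gcongr) t
    linarith [(abs_lt.1 (hfq x hxP)).2]

end Hamming

theorem exists_isSeparatingFamily {c : ℝ} (hc : 1 < c) :
    ∃ a : ℕ, ∀ {ι : Type*} [Fintype ι] [Nonempty ι] (P : Finset (ι → Bool)), 2 ≤ #P →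
      ∀ r : ℝ, 0 < r →
        ∃ 𝓦, IsSeparatingFamily P r (c * r) 𝓦 ∧ #𝓦 ≤ #P ^ a * Fintype.card ι := by
  obtain ⟨δ, hδ, hgap⟩ := exists_gap_le_pow_sub_pow hc
  obtain ⟨C, hC⟩ := exists_sample_size hδ
  refine ⟨C + 1, fun {ι} _ _ P hP r hr ↦ ?_⟩
  set d := Fintype.card ι
  have hd : 0 < d := Fintype.card_pos
  have hd' : (0 : ℝ) < d := by exact_mod_cast hd
  rcases le_or_gt (d : ℝ) (c * r) with hdr | hrd
  · refine ⟨{P}, ⟨by simp, fun q ↦ ⟨P, by simp, Finset.filter_subset _ _, fun x hx ↦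
      mem_hammingBall.2 ⟨hx, (hammingDist_le_card q x).trans hdr⟩⟩⟩, ?_⟩
    rw [Finset.card_singleton]
    exact Nat.mul_pos (by positivity) hd
  · obtain ⟨m, hpow, hm⟩ := hC #P hP
    obtain ⟨t, ht⟩ := hgap (r / d) (by positivity) (by rwa [← mul_div_assoc, div_lt_one hd'])
    rw [← mul_div_assoc] at ht
    obtain ⟨𝓦, h𝓦, hcard⟩ := exists_isSeparatingFamily_of_gap P hδ.le (by nlinarith) ht hm
    refine ⟨𝓦, h𝓦, hcard.trans ?_⟩
    calc (d + 1) * 2 ^ m ≤ (#P * d) * #P ^ C := Nat.mul_le_mul (by nlinarith) hpow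
      _ = #P ^ (C + 1) * d := by ring

theorem exists_isSeparatingFamily_forall_radius {c : ℝ} (hc : 1 < c) :
    ∃ a : ℕ, ∀ {ι : Type*} [Fintype ι] [Nonempty ι] (P : Finset (ι → Bool)), 2 ≤ #P →
      ∃ 𝓦, (∀ r : ℕ, IsSeparatingFamily P r (c * r) 𝓦) ∧ #𝓦 ≤ #P ^ a * Fintype.card ι ^ 2 := by
  classical
  obtain ⟨a, ha⟩ := exists_isSeparatingFamily hc
  refine ⟨a + 1, fun {ι} _ _ P hP ↦ ?_⟩
  set d := Fintype.card ι with hd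
  have hd0 : 0 < d := Fintype.card_pos
  -- Distances are integers, so radius `0` may be replaced by the positive radius `1 / (2 * c)`.
  have hradius (i : ℕ) : 0 < max (i : ℝ) (2 * c)⁻¹ := lt_max_of_lt_right (by positivity)
  choose 𝓦 h𝓦 hcard using fun i : ℕ ↦ ha P hP _ (hradius i)
  refine ⟨(Finset.range (d + 1)).biUnion 𝓦, fun r ↦ ⟨?_, fun q ↦ ?_⟩, ?_⟩
  · simp only [Finset.mem_biUnion]
    exact fun W ⟨i, _, hW⟩ ↦ (h𝓦 i).1 W hW
  · obtain ⟨W, hW, hnear, hfar⟩ := (h𝓦 (min r d)).2 q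
    refine ⟨W, Finset.mem_biUnion.2 ⟨min r d, by simp, hW⟩, ?_, ?_⟩
    · refine ((hammingBall_subset_min_card P q r).trans (hammingBall_mono P q ?_)).trans hnear
      rw [← hd, ← Nat.cast_min]
      exact le_max_left _ _
    · refine hfar.trans ((hammingBall_mul_max_subset P q hc.le _).trans (hammingBall_mono P q ?_))
      gcongr
      exact min_le_left r d
  · calc #((Finset.range (d + 1)).biUnion 𝓦) ≤ (d + 1) * (#P ^ a * d) := by
          simpa using Finset.card_biUnion_le_card_mul (.range (d + 1)) 𝓦 _ fun i _ ↦ hcard i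
      _ ≤ (#P * d) * (#P ^ a * d) := Nat.mul_le_mul_right _ (by nlinarith)
      _ = #P ^ (a + 1) * d ^ 2 := by ring

section Blocks

variable {α : Type*} [DecidableEq α]

theorem exists_sup_eq_of_card_le_mul {N B : ℕ} (S : Finset α) (hS : #S ≤ N * B) :
    ∃ 𝓒 : Finset (Finset α), #𝓒 ≤ N ∧ (∀ b ∈ 𝓒, #b ≤ B) ∧ 𝓒.sup id = S := by
  induction N generalizing S with
  | zero => exact ⟨∅, by simp, by simp, by simp_all⟩
  | succ N ih =>
    obtain ⟨b, hbS, hb⟩ := Finset.exists_subset_card_eq (min_le_right B #S)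
    obtain ⟨𝓒, hcard, hsize, hsup⟩ := ih (S \ b) (by
      rw [Finset.card_sdiff_of_subset hbS]
      rw [Nat.succ_mul] at hS
      omega)
    refine ⟨insert b 𝓒, (𝓒.card_insert_le b).trans (by omega), ?_, ?_⟩
    · simpa [hb] using hsize
    · rw [Finset.sup_insert, hsup]
      exact Finset.union_sdiff_of_subset hbS

theorem exists_blocks {N B k : ℕ} (hk : k ≤ N * B) (𝓦 : Finset (Finset α)) :
    ∃ 𝓑 : Finset (Finset α), #𝓑 ≤ #𝓦 * N ∧ (∀ b ∈ 𝓑, (∃ W ∈ 𝓦, b ⊆ W) ∧ #b ≤ B) ∧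
      ∀ W ∈ 𝓦, k ≤ #W → ∃ 𝓒 ⊆ 𝓑, #𝓒 ≤ N ∧ 𝓒.sup id ⊆ W ∧ #(𝓒.sup id) = k := by
  have hblocks (W : Finset α) : ∃ 𝓒 : Finset (Finset α), #𝓒 ≤ N ∧ (∀ b ∈ 𝓒, #b ≤ B) ∧
      𝓒.sup id ⊆ W ∧ #(𝓒.sup id) = min k #W := by
    obtain ⟨S, hSW, hS⟩ := Finset.exists_subset_card_eq (min_le_right k #W)
    obtain ⟨𝓒, hcard, hsize, rfl⟩ :=
      exists_sup_eq_of_card_le_mul S (hS.trans_le ((min_le_left _ _).trans hk))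
    exact ⟨𝓒, hcard, hsize, hSW, hS⟩
  choose blocks hcard hsize hsub hsup using hblocks
  refine ⟨𝓦.biUnion blocks, Finset.card_biUnion_le_card_mul _ _ _ fun W _ ↦ hcard W, ?_, ?_⟩
  · intro b hb
    obtain ⟨W, hW, hbW⟩ := Finset.mem_biUnion.1 hb
    exact ⟨⟨W, hW, (Finset.le_sup (f := id) hbW).trans (hsub W)⟩, hsize W b hbW⟩
  · exact fun W hW hkW ↦ ⟨blocks W, Finset.subset_biUnion_of_mem _ hW, hcard W, hsub W,
      (hsup W).trans (min_eq_left hkW)⟩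

end Blocks

theorem le_natCeil_div_mul (k : ℕ) {B : ℕ} (hB : 0 < B) : k ≤ ⌈(k : ℝ) / (B : ℝ)⌉₊ * B := by
  have hceil := Nat.le_ceil ((k : ℝ) / (B : ℝ))
  rw [div_le_iff₀ (by exact_mod_cast hB)] at hceil
  exact_mod_cast hceil

theorem IsHammingKNNRadius.le_card_hammingBall {d k r : ℕ} {P : Finset (Fin d → Bool)}
    {q : Fin d → Bool} (h : IsHammingKNNRadius P k q r) : k ≤ #(hammingBall P q r) := by
  obtain ⟨T, hTP, rfl, -, hTr, -⟩ := h
  exact Finset.card_le_card fun x hx ↦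
    mem_hammingBall.2 ⟨hTP hx, by exact_mod_cast hTr x hx⟩

/-- Theorem 4, Hamming indexing scheme: for every `c > 1`
there is a polynomial-space family of blocks answering `c`-approximate
`k`-nearest-neighbor queries in Hamming space in `⌈k/B⌉` I/Os. -/
theorem hamming_approx_indexing_scheme (c : ℝ) (hc : 1 < c) :
    ∃ a : ℝ, 0 < a ∧
      ∀ d n k B : ℕ, 0 < d → 0 < n → 0 < k → 0 < B → 2 ≤ n → k ≤ n →
      ∀ P : Finset (Fin d → Bool), P.card = n →
      ∃ 𝓑 : Finset (Finset (Fin d → Bool)),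
        (𝓑.card : ℝ) ≤ (n : ℝ) ^ a * (d : ℝ) ^ 2 * (⌈(k : ℝ) / (B : ℝ)⌉₊ : ℝ) ∧
        (∀ b ∈ 𝓑, b ⊆ P ∧ b.card ≤ B) ∧
        ∀ q : Fin d → Bool, ∀ r : ℕ, IsHammingKNNRadius P k q r →
          ∃ 𝓒 ⊆ 𝓑, 𝓒.card ≤ ⌈(k : ℝ) / (B : ℝ)⌉₊ ∧
            ∃ S ⊆ 𝓒.sup id, S.card = k ∧
              ∀ x ∈ S, (hammingDist q x : ℝ) ≤ c * (r : ℝ) := by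
  obtain ⟨a, ha⟩ := exists_isSeparatingFamily_forall_radius hc
  refine ⟨(a + 1 : ℕ), by positivity, fun d n k B hd _ _ hB hn _ P hP ↦ ?_⟩
  subst hP
  have : Nonempty (Fin d) := Fin.pos_iff_nonempty.1 hd
  obtain ⟨𝓦, h𝓦, hcard𝓦⟩ := ha P hn
  obtain ⟨𝓑, hcard𝓑, hblock, hcover⟩ := exists_blocks (le_natCeil_div_mul k hB) 𝓦
  refine ⟨𝓑, ?_, fun b hb ↦ ?_, fun q r hr ↦ ?_⟩
  · rw [Fintype.card_fin] at hcard𝓦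
    have hcard : #𝓑 ≤ #P ^ (a + 1) * d ^ 2 * ⌈(k : ℝ) / (B : ℝ)⌉₊ := by
      refine hcard𝓑.trans (Nat.mul_le_mul_right _ (hcard𝓦.trans ?_))
      gcongr
      omega
    rw [Real.rpow_natCast]
    exact_mod_cast hcard
  · obtain ⟨⟨W, hW, hbW⟩, hbB⟩ := hblock b hb
    exact ⟨hbW.trans ((h𝓦 0).1 W hW), hbB⟩
  · obtain ⟨W, hW, hnear, hfar⟩ := (h𝓦 r).2 q
    obtain ⟨𝓒, h𝓒, hcard𝓒, hsub, hk⟩ :=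
      hcover W hW (hr.le_card_hammingBall.trans (Finset.card_le_card hnear))
    exact ⟨𝓒, h𝓒, hcard𝓒, 𝓒.sup id, subset_rfl, hk, fun x hx ↦
      (mem_hammingBall.1 (hfar (hsub hx))).2⟩
end
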